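/- arXiv:2102.04120 — 2 statements merged into one kernel-verified Lean document; each statement's English description precedes it below -/
import Mathlib

section
/- Let R be a commutative ring with identity, n ≥ 2, and let g be an n×n upper unitriangular matrix over R (all diagonal entries equal 1, all entries below the diagonal equal 0). Fix k ≥ 1 and suppose that g_{i,j} = 0 whenever 0 < j − i < k. Then for every natural number m and every index i with i + k ≤ n, the (i, i+k) entry of g^m equals m · g_{i,i+k}. -/
/-- Let `g` be an `n × n` upper unitriangular matrix over a commutative ring `R` (with `n ≥ 2`),
and let `k ≥ 1` be such that `g i j = 0` whenever `0 < j - i < k`.  Then for every natural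
number `m` and all indices `i, j` with `j = i + k`, the `(i, j)` entry of `g ^ m` is
`m • g i j`. -/
theorem pow_entry_of_unitriangular_band {R : Type*} [CommRing R] {n : ℕ} (hn : 2 ≤ n)
    (g : Matrix (Fin n) (Fin n) R)
    (hdiag : ∀ i : Fin n, g i i = 1)
    (hlow : ∀ i j : Fin n, (j : ℕ) < (i : ℕ) → g i j = 0)
    (k : ℕ) (hk : 1 ≤ k)
    (hband : ∀ i j : Fin n, (i : ℕ) < (j : ℕ) → (j : ℕ) - (i : ℕ) < k → g i j = 0)
    (m : ℕ) (i j : Fin n) (hij : (j : ℕ) = (i : ℕ) + k) :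
    (g ^ m) i j = m • g i j := by
  have key : ∀ m : ℕ, ∀ i j : Fin n, (j : ℕ) ≤ (i : ℕ) + k →
      (g ^ m) i j = if i = j then 1 else m • g i j := by
    intro m
    induction m with
    | zero =>
      intro i j _
      simp [Matrix.one_apply]
    | succ m ih =>
      intro i j hj
      rw [pow_succ, Matrix.mul_apply]
      have hz : ∀ l : Fin n, l ≠ i → l ≠ j → (g ^ m) i l * g l j = 0 := by
        intro l hli hlj
        have h1 : (l : ℕ) ≠ i := fun h => hli (Fin.ext h)
        have h2 : (l : ℕ) ≠ j := fun h => hlj (Fin.ext h)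
        rcases lt_or_gt_of_ne h2 with h | h
        · rw [ih i l (by omega), if_neg (Ne.symm hli)]
          have : g i l = 0 := by
            rcases lt_or_gt_of_ne h1 with h' | h'
            · exact hlow _ _ h'
            · exact hband _ _ h' (by omega)
          simp [this]
        · rw [hlow l j h, mul_zero]
      by_cases hij : i = j
      · subst hij
        rw [Finset.sum_eq_single i (fun l _ hl => hz l hl hl) (by simp),
          ih i i (by omega), hdiag]
        simp
      · rw [Finset.sum_eq_add i j hij (fun l _ hl => hz l hl.1 hl.2) (by simp) (by simp),
          ih i i (by omega), ih i j hj, hdiag j, if_neg hij, if_neg hij, if_pos rfl,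
          one_mul, mul_one, succ_nsmul, add_comm]
  rw [key m i j hij.le, if_neg]
  rintro rfl
  omega
end

section
/- (Proposition: PSP reduction for unitriangular matrices) Let R be a commutative ring with identity, n ≥ 2, and let g be an n×n upper unitriangular matrix over R that is not the identity matrix. Then there exist indices i < j such that g_{i,j} ≠ 0 and, for every natural number m, the (i,j) entry of g^m equals m · g_{i,j}. Consequently, solving the power search problem for g in UT(n,R) reduces to solving the power search problem in the additive group of R. -/
/-- PSP reduction for unitriangular matrices.  If `g` is an `n × n` upper unitriangular matrix
over a commutative ring `R` (with `n ≥ 2`) and `g` is not the identity matrix, then there are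
indices `i < j` with `g i j ≠ 0` such that the `(i, j)` entry of `g ^ m` equals `m • g i j`
for every natural number `m`.  Hence the power search problem for `g` in `UT(n, R)` reduces to
the power search problem in the additive group of `R`. -/
theorem unitriangular_psp_reduction {R : Type*} [CommRing R] {n : ℕ} (hn : 2 ≤ n)
    (g : Matrix (Fin n) (Fin n) R)
    (hdiag : ∀ i : Fin n, g i i = 1)
    (hlow : ∀ i j : Fin n, (j : ℕ) < (i : ℕ) → g i j = 0)
    (hne : g ≠ 1) :
    ∃ i j : Fin n, (i : ℕ) < (j : ℕ) ∧ g i j ≠ 0 ∧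
      ∀ m : ℕ, (g ^ m) i j = m • g i j := by
  classical
  -- `i` is the last row of `g` that is not a row of the identity matrix
  have hex : (Finset.univ.filter fun i : Fin n => g i ≠ (1 : Matrix (Fin n) (Fin n) R) i).Nonempty := by
    by_contra h
    apply hne
    funext i
    by_contra hi
    exact h ⟨i, by simpa using hi⟩
  obtain ⟨i, hi, hmax⟩ := Finset.exists_max_image _ (fun i : Fin n => (i : ℕ)) hex
  have hi' : g i ≠ (1 : Matrix (Fin n) (Fin n) R) i := (Finset.mem_filter.mp hi).2
  have hrow : ∀ k : Fin n, (i : ℕ) < k → g k = (1 : Matrix (Fin n) (Fin n) R) k := by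
    intro k hk
    by_contra h
    have := hmax k (Finset.mem_filter.mpr ⟨Finset.mem_univ _, h⟩)
    omega
  obtain ⟨j, hj⟩ := Function.ne_iff.mp hi'
  have hij : (i : ℕ) < j := by
    rcases lt_trichotomy (i : ℕ) j with h | h | h
    · exact h
    · have : i = j := Fin.ext h
      subst this
      exact absurd (by rw [hdiag, Matrix.one_apply_eq]) hj
    · have hne' : i ≠ j := by rintro rfl; omega
      exact absurd (by rw [hlow i j h, Matrix.one_apply_ne hne']) hj
  have hne' : i ≠ j := by rintro rfl; omega
  have hpow : ∀ m : ℕ, ∀ k : Fin n, (i : ℕ) < k → ∀ b,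
      (g ^ m) k b = (1 : Matrix (Fin n) (Fin n) R) k b := by
    intro m
    induction m with
    | zero => intro k _ b; rw [pow_zero]
    | succ m ih =>
      intro k hk b
      rw [pow_succ', Matrix.mul_apply, hrow k hk, ← Matrix.mul_apply, one_mul, ih k hk]
  refine ⟨i, j, hij, by rwa [Matrix.one_apply_ne hne'] at hj, ?_⟩
  intro m
  induction m with
  | zero => rw [pow_zero, Matrix.one_apply_ne hne', zero_smul]
  | succ m ih =>
    have hterm : ∀ k : Fin n, g i k * (g ^ m) k j =
        (if k = i then (g ^ m) i j else 0) + (if k = j then g i j else 0) := by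
      intro k
      rcases lt_trichotomy (i : ℕ) k with h | h | h
      · have hki : k ≠ i := by rintro rfl; omega
        rw [hpow m k h, Matrix.one_apply, if_neg hki]
        by_cases hkj : k = j
        · subst hkj; simp
        · simp [hkj]
      · have : i = k := Fin.ext h
        subst this
        simp [hdiag, hne']
      · have h1 : k ≠ i := by rintro rfl; omega
        have h2 : k ≠ j := by rintro rfl; omega
        simp [hlow i k h, h1, h2]
    rw [pow_succ', Matrix.mul_apply, Finset.sum_congr rfl (fun k _ => hterm k),
      Finset.sum_add_distrib, Finset.sum_ite_eq', Finset.sum_ite_eq', if_pos (Finset.mem_univ _),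
      if_pos (Finset.mem_univ _), ih, succ_nsmul]
end
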